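/- arXiv:2108.05474 — 5 statements merged into one kernel-verified Lean document; each statement's English description precedes it below -/
import Mathlib

section
/- For every ε > 0 there exists δ > 0 such that the following holds for all sufficiently large k: setting r = ⌊(1+δ)k⌋, for every n < (1/2 − ε)k², no word σ ∈ [r]^n is a k-superpattern. -/
/-- A word `σ ∈ [r]^n` contains a permutation `τ ∈ S_k` as a pattern. -/
def ContainsPattern {n r k : ℕ} (σ : Fin n → Fin r) (τ : Equiv.Perm (Fin k)) : Prop :=
  ∃ i : Fin k → Fin n, StrictMono i ∧ ∀ j j' : Fin k, σ (i j) < σ (i j') ↔ τ j < τ j'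

/-- A word `σ ∈ [r]^n` is a `k`-superpattern. -/
def IsSuperpattern {n r : ℕ} (k : ℕ) (σ : Fin n → Fin r) : Prop :=
  ∀ τ : Equiv.Perm (Fin k), ContainsPattern σ τ

/-!
Cut each permutation of `[k]` into `m` consecutive blocks of `L` letters, where `m` is a large
constant and `m * L ≤ k`. A copy of it in a word of length `n` must fit one of these blocks into a
window of length `n / m`. A permutation is one of at most `(k - L)!` sharing a given block, so if
the word is a `k`-superpattern then `k! / (k - L)!` is at most the number of choices of a block, a
window, a set of `k` letters used by the copy, and a subsequence of length `L` of the window.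

The subsequences of a window are counted by weighting: if each subsequence is embedded greedily,
the next letter advances to its first occurrence, and distinct letters have distinct first
occurrences. So for `0 ≤ z ≤ 1` a word of length `N` over `[r]` has at most
`z ^ (-N) * (z + z ^ 2 + ⋯ + z ^ r) ^ L` distinct subsequences of length `L`. For
`z = exp (-ε / k)` and `n < (1 / 2 - ε) * k ^ 2` this falls short of `k! / (k - L)!` by a factor
exponential in `k`, whereas `r.choose k` contributes an exponential factor whose rate tends to `0`
with `δ`, and the other choices only a polynomial one.
-/

open Finset Filter Real
open scoped List Nat Topology

theorem sum_le_sum_range_card_of_antitone {M : Type*} [AddCommMonoid M] [PartialOrder M]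
    [IsOrderedAddMonoid M] {f : ℕ → M} (hf : Antitone f) (s : Finset ℕ) :
    ∑ i ∈ s, f i ≤ ∑ i ∈ range #s, f i := by
  induction s using Finset.induction_on_max with
  | empty => simp
  | insert a s ha ih =>
    have has : a ∉ s := fun h ↦ (ha a h).false
    have hcard : #s ≤ a := by
      simpa using card_le_card fun x hx ↦ mem_range.2 (ha x hx)
    rw [sum_insert has, card_insert_of_notMem has, sum_range_succ, add_comm]
    gcongr
    exact hf hcard

section DistinctSubsequences

variable {α R : Type*} [DecidableEq α] [CommSemiring R] [LinearOrder R] [IsStrictOrderedRing R]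

theorem sum_pow_idxOf_succ_le [Fintype α] {z : R} (hz₀ : 0 ≤ z) (hz₁ : z ≤ 1) (l : List α) :
    ∑ x ∈ l.toFinset, z ^ (l.idxOf x + 1) ≤ ∑ j ∈ range (Fintype.card α), z ^ (j + 1) := by
  have hinj : Set.InjOn (l.idxOf ·) l.toFinset := fun x hx y _ h ↦
    (List.idxOf_inj (List.mem_toFinset.1 hx)).1 h
  have hanti : Antitone fun j : ℕ ↦ z ^ (j + 1) := fun i j hij ↦
    pow_le_pow_of_le_one hz₀ hz₁ (by gcongr)
  calc ∑ x ∈ l.toFinset, z ^ (l.idxOf x + 1)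
      = ∑ j ∈ l.toFinset.image (l.idxOf ·), z ^ (j + 1) :=
        (sum_image (f := fun j ↦ z ^ (j + 1)) hinj).symm
    _ ≤ ∑ j ∈ range #(l.toFinset.image (l.idxOf ·)), z ^ (j + 1) :=
        sum_le_sum_range_card_of_antitone hanti _
    _ ≤ ∑ j ∈ range (Fintype.card α), z ^ (j + 1) := by
        gcongr
        exact card_image_le.trans (card_le_univ _)

theorem sublistsLen_succ_toFinset_subset (L : ℕ) (l : List α) :
    (l.sublistsLen (L + 1)).toFinset ⊆ l.toFinset.biUnion fun x ↦
      ((l.drop (l.idxOf x + 1)).sublistsLen L).toFinset.image (x :: ·) := by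
  intro w hw
  obtain ⟨hwl, hlen⟩ := List.mem_sublistsLen.1 (List.mem_toFinset.1 hw)
  obtain ⟨x, w, rfl⟩ := List.exists_cons_of_length_eq_add_one hlen
  obtain ⟨l₁, l₂, rfl, hx, hw₂⟩ := List.cons_sublist_iff.1 hwl
  have hdrop : w.Sublist ((l₁ ++ l₂).drop ((l₁ ++ l₂).idxOf x + 1)) := by
    rw [List.idxOf_append_of_mem hx,
      List.drop_append_of_le_length (List.idxOf_lt_length_iff.2 hx)]
    exact hw₂.trans (List.sublist_append_right _ _)
  simp only [mem_biUnion, List.mem_toFinset, mem_image, List.mem_sublistsLen]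
  exact ⟨x, List.mem_append_left _ hx, w, ⟨hdrop, by simpa using hlen⟩, rfl⟩

theorem card_sublistsLen_mul_pow_length_le [Fintype α] {z : R} (hz₀ : 0 ≤ z) (hz₁ : z ≤ 1)
    (L : ℕ) (l : List α) :
    #(l.sublistsLen L).toFinset * z ^ l.length ≤
      (∑ j ∈ range (Fintype.card α), z ^ (j + 1)) ^ L := by
  induction L generalizing l with
  | zero => simpa using pow_le_one₀ hz₀ hz₁
  | succ L ih =>
    set Q := ∑ j ∈ range (Fintype.card α), z ^ (j + 1)
    let tail (x : α) := l.drop (l.idxOf x + 1)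
    have hcard : #(l.sublistsLen (L + 1)).toFinset ≤
        ∑ x ∈ l.toFinset, #((tail x).sublistsLen L).toFinset :=
      (card_le_card (sublistsLen_succ_toFinset_subset L l)).trans <|
        card_biUnion_le.trans <| sum_le_sum fun _ _ ↦ card_image_le
    have hlen {x} (hx : x ∈ l.toFinset) : l.length = (tail x).length + (l.idxOf x + 1) := by
      have hidx := List.idxOf_lt_length_iff.2 (List.mem_toFinset.1 hx)
      simp only [tail, List.length_drop]
      lia
    calc (#(l.sublistsLen (L + 1)).toFinset : R) * z ^ l.length
        ≤ (∑ x ∈ l.toFinset, #((tail x).sublistsLen L).toFinset : ℕ) * z ^ l.length := by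
          gcongr
      _ = ∑ x ∈ l.toFinset, #((tail x).sublistsLen L).toFinset * z ^ (tail x).length *
            z ^ (l.idxOf x + 1) := by
          rw [Nat.cast_sum, sum_mul]
          refine sum_congr rfl fun x hx ↦ ?_
          rw [mul_assoc, ← pow_add, ← hlen hx]
      _ ≤ ∑ x ∈ l.toFinset, Q ^ L * z ^ (l.idxOf x + 1) := by
          gcongr with x
          exact ih (tail x)
      _ = Q ^ L * ∑ x ∈ l.toFinset, z ^ (l.idxOf x + 1) := (mul_sum ..).symm
      _ ≤ Q ^ L * Q := by
          gcongr
          exact sum_pow_idxOf_succ_le hz₀ hz₁ l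
      _ = Q ^ (L + 1) := (pow_succ Q L).symm

end DistinctSubsequences

theorem exists_block_sublist_window_of_sublist {α : Type*} {w l : List α} (h : w.Sublist l)
    {m L N : ℕ} (hm : m * L ≤ w.length) (hN : l.length < m * (N + 1)) :
    ∃ c < m, ∃ a ≤ l.length,
      ((w.drop (c * L)).take L).Sublist ((l.drop a).take N) := by
  induction m generalizing w l with
  | zero => simp at hN
  | succ m ih =>
    rw [← List.take_append_drop L w] at h
    obtain ⟨l₁, l₂, rfl, h₁, h₂⟩ := List.append_sublist_iff.1 h
    obtain hl₁ | hl₁ := le_or_gt l₁.length N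
    · refine ⟨0, m.succ_pos, 0, Nat.zero_le _, ?_⟩
      rw [zero_mul, List.drop_zero, List.drop_zero, List.take_append, List.take_of_length_le hl₁]
      exact h₁.trans (List.sublist_append_left ..)
    · rw [List.length_append] at hN
      obtain ⟨c, hc, a, ha, hca⟩ := ih h₂ (by rw [List.length_drop]; lia) (by lia)
      refine ⟨c + 1, by lia, l₁.length + a, by simpa using ha, ?_⟩
      rwa [← List.drop_drop, List.drop_left, add_one_mul, add_comm (c * L), ← List.drop_drop]

theorem card_perm_eqOn {α : Type*} [Fintype α] [DecidableEq α] (τ : Equiv.Perm α)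
    (s : Finset α) : #{ρ : Equiv.Perm α | ∀ x ∈ s, ρ x = τ x} = (Fintype.card α - #s)! := by
  calc #{ρ : Equiv.Perm α | ∀ x ∈ s, ρ x = τ x}
      = #{ρ : Equiv.Perm α | ∀ x, ¬ x ∉ s → ρ x = x} :=
        card_equiv (Equiv.mulLeft τ⁻¹) (by simp [Equiv.symm_apply_eq])
    _ = Fintype.card (Equiv.Perm {x // x ∉ s}) := by
        rw [Fintype.card_congr (Equiv.Perm.subtypeEquivSubtypePerm (· ∉ s)), Fintype.card_subtype]
    _ = (Fintype.card α - #s)! := by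
        rw [Fintype.card_perm, Fintype.card_subtype_compl, Fintype.card_coe]

theorem card_perm_block_eq_le {k p L : ℕ} (h : p + L ≤ k) (τ : Equiv.Perm (Fin k)) :
    #{ρ : Equiv.Perm (Fin k) | ((List.ofFn ρ).drop p).take L = ((List.ofFn τ).drop p).take L} ≤
      (k - L)! := by
  let block : Fin L ↪ Fin k := (Fin.natAddEmb p).trans (Fin.castLEEmb h)
  have hfix := card_perm_eqOn τ (univ.map block)
  rw [Fintype.card_fin, card_map, card_fin] at hfix
  refine (card_le_card fun ρ hρ ↦ ?_).trans hfix.le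
  simp only [mem_filter_univ, Finset.mem_map, mem_univ, true_and, forall_exists_index,
    forall_apply_eq_imp_iff] at hρ ⊢
  intro i
  have hi := congrArg (·[(i : ℕ)]?) hρ
  have hpik : p + i < k := by lia
  simpa [List.getElem?_take, hpik] using! hi

theorem card_perm_map_block_sublist_le {α : Type*} [DecidableEq α] {k p L : ℕ} (h : p + L ≤ k)
    {f : Fin k → α} (hf : f.Injective) (u : List α) :
    #{τ : Equiv.Perm (Fin k) | (((List.ofFn τ).drop p).take L).map f <+ u} ≤
      (k - L)! * #(u.sublistsLen L).toFinset := by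
  let block (τ : Equiv.Perm (Fin k)) : List (Fin k) := ((List.ofFn τ).drop p).take L
  refine card_le_mul_card_image_of_maps_to (f := fun τ ↦ (block τ).map f) (fun τ hτ ↦ ?_) _
    fun w _ ↦ ?_
  · have hlen : (block τ).length = L := by
      simp only [block, List.length_take, List.length_drop, List.length_ofFn]
      lia
    exact List.mem_toFinset.2 <| List.mem_sublistsLen.2
      ⟨(mem_filter.1 hτ).2, by rw [List.length_map, hlen]⟩
  · obtain hempty | ⟨τ, hτ⟩ := eq_empty_or_nonempty
      {τ ∈ {τ : Equiv.Perm (Fin k) | (block τ).map f <+ u} | (block τ).map f = w}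
    · rw [hempty, card_empty]
      exact Nat.zero_le _
    · refine (card_le_card fun ρ hρ ↦ ?_).trans (card_perm_block_eq_le h τ)
      have hρτ := (mem_filter.1 hρ).2.trans (mem_filter.1 hτ).2.symm
      exact mem_filter_univ _ |>.2 (hf.list_map hρτ)

theorem card_orderEmbedding_fin (k : ℕ) (α : Type*) [Finite α] [LinearOrder α] :
    Nat.card (Fin k ↪o α) = (Nat.card α).choose k := by
  rw [Nat.card_congr Set.powersetCard.ofFinEmbEquiv, Set.powersetCard.card]

theorem pow_le_descFactorial_mul_exp {k L : ℕ} (h : L < k) :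
    (k : ℝ) ^ L ≤ k.descFactorial L * exp (L ^ 2 / (k - L)) := by
  have hkL : (0 : ℝ) < k - L := sub_pos.2 (by exact_mod_cast h)
  have hbase : (k : ℝ) ≤ (k - L) * exp (L / (k - L)) := by
    calc (k : ℝ) = (k - L) * (L / (k - L) + 1) := by field_simp; ring
      _ ≤ (k - L) * exp (L / (k - L)) := by gcongr; exact add_one_le_exp _
  have hdesc : ((k : ℝ) - L) ^ L ≤ k.descFactorial L := by
    rw [← Nat.cast_sub h.le]
    exact_mod_cast (Nat.pow_le_pow_left (by lia) L).trans (Nat.pow_sub_le_descFactorial k L)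
  calc (k : ℝ) ^ L ≤ ((k - L) * exp (L / (k - L))) ^ L := by gcongr
    _ = (k - L) ^ L * exp (L ^ 2 / (k - L)) := by
      rw [mul_pow, ← exp_nat_mul]
      congr 2
      ring
    _ ≤ k.descFactorial L * exp (L ^ 2 / (k - L)) := by gcongr

theorem pow_le_descFactorial_mul_exp_of_mul_le {k m L : ℕ} (hk : 0 < k) (hm : 2 ≤ m)
    (hmL : m * L ≤ k) : (k : ℝ) ^ L ≤ k.descFactorial L * exp (L * (2 / m)) := by
  have h2L : 2 * L ≤ k := (Nat.mul_le_mul_right L hm).trans hmL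
  have hkL : (0 : ℝ) < k - L := sub_pos.2 (by exact_mod_cast (by lia : L < k))
  have hgap : (L : ℝ) * m ≤ 2 * (k - L) := by
    have h2L' : 2 * (L : ℝ) ≤ k := by exact_mod_cast h2L
    have hmL' : (m : ℝ) * L ≤ k := by exact_mod_cast hmL
    linarith
  refine (pow_le_descFactorial_mul_exp (by lia)).trans ?_
  rw [sq, mul_div_assoc]
  gcongr _ * exp (_ * ?_)
  rwa [div_le_div_iff₀ hkL (by positivity)]

theorem exp_neg_add_exp_neg_le {x y : ℝ} (hx : 0 ≤ x) (hy : 0 ≤ y) :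
    exp (-x) + exp (-y) ≤ 2 * exp (-(x + y) / 2 + (x + y) ^ 2 / 8) := by
  calc exp (-x) + exp (-y) = 2 * (exp (-(x + y) / 2) * cosh ((x - y) / 2)) := by
        rw [cosh_eq, mul_div_assoc', mul_add, ← exp_add, ← exp_add]
        ring_nf
    _ ≤ 2 * (exp (-(x + y) / 2) * exp (((x - y) / 2) ^ 2 / 2)) := by
        gcongr
        exact cosh_le_exp_half_sq _
    _ ≤ 2 * exp (-(x + y) / 2 + (x + y) ^ 2 / 8) := by
        rw [← exp_add, mul_le_mul_iff_right₀ two_pos, exp_le_exp]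
        linarith [mul_nonneg hx hy]

theorem sum_range_exp_neg_pow_succ_le {t : ℝ} (ht : 0 ≤ t) (r : ℕ) :
    ∑ j ∈ range r, exp (-t) ^ (j + 1) ≤ r * exp (-(t * r) / 2 + (t * r) ^ 2 / 8) := by
  let f (j : ℕ) : ℝ := exp (-t) ^ (j + 1)
  have hf (j : ℕ) : f j = exp (-(t * (j + 1))) := by
    simp only [f, ← exp_nat_mul]
    push_cast
    ring_nf
  have hpair {j : ℕ} (hj : j ∈ range r) :
      f j + f (r - 1 - j) ≤ 2 * exp (-(t * r) / 2 + (t * r) ^ 2 / 8) := by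
    have hsplit : t * (j + 1) + t * (r - 1 - j : ℕ) = t * r := by
      rw [← mul_add]
      have hjr : j + 1 + (r - 1 - j) = r := by
        have hj := mem_range.1 hj
        lia
      exact_mod_cast congrArg (fun i : ℕ ↦ t * i) hjr
    rw [hf, hf, ← hsplit]
    refine le_trans ?_ (exp_neg_add_exp_neg_le (by positivity) (by positivity))
    gcongr
    linarith
  have hsum : ∑ j ∈ range r, f j + ∑ j ∈ range r, f j ≤
      r * (2 * exp (-(t * r) / 2 + (t * r) ^ 2 / 8)) := by
    calc ∑ j ∈ range r, f j + ∑ j ∈ range r, f j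
        = ∑ j ∈ range r, (f j + f (r - 1 - j)) := by
          rw [sum_add_distrib, sum_range_reflect]
      _ ≤ ∑ j ∈ range r, 2 * exp (-(t * r) / 2 + (t * r) ^ 2 / 8) := sum_le_sum fun _ ↦ hpair
      _ = r * (2 * exp (-(t * r) / 2 + (t * r) ^ 2 / 8)) := by simp
  linarith

theorem sum_range_exp_neg_div_pow_succ_le {θ δ : ℝ} (hθ : 0 ≤ θ) (hδ : δ ≤ 1) {k r : ℕ}
    (hk : 0 < k) (hkr : k ≤ r) (hr : r ≤ (1 + δ) * k) :
    ∑ j ∈ range r, exp (-(θ / k)) ^ (j + 1) ≤ k * exp (δ - θ / 2 + θ ^ 2 / 2) := by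
  set x := θ / k * r
  have hx : x = θ * (r / k) := by ring
  have hθx : θ ≤ x := by
    rw [hx]
    exact le_mul_of_one_le_right hθ ((one_le_div₀ (by positivity)).2 (by exact_mod_cast hkr))
  have hxθ : x ≤ 2 * θ := by
    have hrk : (r : ℝ) / k ≤ 2 := (div_le_iff₀ (by positivity)).2 (hr.trans (by gcongr; linarith))
    rw [hx, mul_comm 2]
    gcongr
  calc ∑ j ∈ range r, exp (-(θ / k)) ^ (j + 1)
      ≤ r * exp (-x / 2 + x ^ 2 / 8) := sum_range_exp_neg_pow_succ_le (by positivity) r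
    _ ≤ (k * exp δ) * exp (-θ / 2 + θ ^ 2 / 2) := by
        refine mul_le_mul ?_ (exp_le_exp.2 (by nlinarith)) (exp_pos _).le (by positivity)
        rw [mul_comm (k : ℝ)]
        refine hr.trans ?_
        gcongr
        linarith [add_one_le_exp δ]
    _ = k * exp (δ - θ / 2 + θ ^ 2 / 2) := by
        rw [mul_assoc, ← exp_add]
        ring_nf

theorem choose_mul_pow_le {δ : ℝ} (hδ : 0 ≤ δ) {k r : ℕ} (h : k ≤ r) :
    r.choose k * δ ^ (r - k) ≤ (1 + δ) ^ r := by
  calc r.choose k * δ ^ (r - k) = 1 ^ k * δ ^ (r - k) * r.choose k := by ring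
    _ ≤ ∑ i ∈ range (r + 1), 1 ^ i * δ ^ (r - i) * r.choose i :=
        single_le_sum (f := fun i ↦ 1 ^ i * δ ^ (r - i) * (r.choose i : ℝ))
          (fun _ _ ↦ by positivity) (mem_range_succ_iff.2 h)
    _ = (1 + δ) ^ r := (add_pow ..).symm

theorem choose_le_exp_mul {δ : ℝ} (hδ₀ : 0 < δ) (hδ₁ : δ ≤ 1) {k r : ℕ} (hr : r ≤ (1 + δ) * k) :
    (r.choose k : ℝ) ≤ exp ((δ * (1 + δ) + negMulLog δ) * k) := by
  obtain hrk | hkr := lt_or_ge r k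
  · rw [Nat.choose_eq_zero_of_lt hrk, Nat.cast_zero]
    exact (exp_pos _).le
  have hpow : exp (-(negMulLog δ * k)) ≤ δ ^ (r - k) := by
    rw [← exp_log hδ₀, ← exp_nat_mul, Nat.cast_sub hkr, exp_log hδ₀, negMulLog]
    gcongr
    nlinarith [log_nonpos hδ₀.le hδ₁]
  have hexp : (1 + δ) ^ r ≤ exp (δ * (1 + δ) * k) := by
    calc (1 + δ) ^ r ≤ exp δ ^ r := by
          gcongr
          linarith [add_one_le_exp δ]
      _ = exp (δ * r) := by rw [← exp_nat_mul, mul_comm]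
      _ ≤ exp (δ * (1 + δ) * k) := by
          rw [mul_assoc]
          gcongr
  have hchoose : r.choose k * exp (-(negMulLog δ * k)) ≤ exp (δ * (1 + δ) * k) :=
    (by gcongr : _ ≤ r.choose k * δ ^ (r - k)).trans
      ((choose_mul_pow_le hδ₀.le hkr).trans hexp)
  rwa [exp_neg, mul_inv_le_iff₀ (exp_pos _), ← exp_add, ← add_mul] at hchoose

theorem eventually_choose_le_exp_mul {κ : ℝ} (hκ : 0 < κ) :
    ∀ᶠ δ : ℝ in 𝓝[>] 0, ∀ k r : ℕ, r ≤ (1 + δ) * k → (r.choose k : ℝ) ≤ exp (κ * k) := by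
  have hrate : Tendsto (fun δ ↦ δ * (1 + δ) + negMulLog δ) (𝓝[>] 0) (𝓝 0) := by
    have hcont : Continuous fun δ ↦ δ * (1 + δ) + negMulLog δ := by fun_prop
    simpa using (hcont.tendsto 0).mono_left nhdsWithin_le_nhds
  filter_upwards [hrate.eventually_le_const hκ, self_mem_nhdsWithin,
    Ioc_mem_nhdsGT zero_lt_one] with δ hδκ hδ₀ hδ₁ k r hr
  refine (choose_le_exp_mul hδ₀ hδ₁.2 hr).trans ?_
  gcongr

theorem eventually_mul_pow_lt_exp_mul (C : ℝ) (p : ℕ) {κ : ℝ} (hκ : 0 < κ) :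
    ∀ᶠ k : ℕ in atTop, C * k ^ p < exp (κ * k) := by
  have hsmall := ((isLittleO_pow_exp_pos_mul_atTop p hκ).const_mul_left C).comp_tendsto
    tendsto_natCast_atTop_atTop |>.def one_half_pos
  filter_upwards [hsmall] with k hk
  have hhalf : C * k ^ p ≤ 2⁻¹ * exp (κ * k) := by simpa using le_of_abs_le hk
  linarith [exp_pos (κ * k)]

theorem two_mul_sub_one_add_le_div_mul {n k m : ℕ} {ε c : ℝ} (hε : 0 ≤ ε) (hm : 0 < m)
    (hk : 0 < k) (hn : n ≤ (1 / 2 - ε) * k ^ 2) (hc₀ : 0 ≤ c) (hc₁ : c ≤ 1)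
    (hc : ε / 2 - 3 / 4 * ε ^ 2 ≤ c) :
    2 * (ε ^ 2 / (8 * m) * k) - 1 + ε * n / (k * m) ≤ (k / m : ℕ) * c := by
  have hfloor : (k : ℝ) / m - 1 ≤ (k / m : ℕ) := by
    rw [sub_le_iff_le_add, div_le_iff₀ (by positivity), mul_comm]
    exact_mod_cast (Nat.lt_mul_div_succ k hm).le
  calc 2 * (ε ^ 2 / (8 * m) * k) - 1 + ε * n / (k * m)
      ≤ 2 * (ε ^ 2 / (8 * m) * k) - 1 + ε * ((1 / 2 - ε) * k ^ 2) / (k * m) := by gcongr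
    _ = k / m * (ε / 2 - 3 / 4 * ε ^ 2) - 1 := by field_simp; ring
    _ ≤ k / m * c - c := by gcongr
    _ = (k / m - 1) * c := by ring
    _ ≤ (k / m : ℕ) * c := by gcongr

theorem ContainsPattern.exists_orderEmbedding_sublist {n r k : ℕ} {σ : Fin n → Fin r}
    {τ : Equiv.Perm (Fin k)} (h : ContainsPattern σ τ) :
    ∃ f : Fin k ↪o Fin r, (List.ofFn τ).map f <+ List.ofFn σ := by
  obtain ⟨i, hi, hσ⟩ := h
  have hmono : StrictMono fun v ↦ σ (i (τ.symm v)) := fun v v' hv ↦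
    (hσ _ _).2 (by simpa using hv)
  have hsub : List.ofFn i <+ List.finRange n :=
    List.sublist_of_subperm_of_sortedLE
      (List.subperm_of_subset hi.sortedLT_ofFn.nodup fun _ _ ↦ List.mem_finRange _)
      hi.sortedLT_ofFn.sortedLE (List.sortedLT_finRange n).sortedLE
  refine ⟨OrderEmbedding.ofStrictMono _ hmono, ?_⟩
  simpa [List.map_ofFn, List.ofFn_eq_map, Function.comp_def] using hsub.map σ

section Superpattern

variable {n r k m L : ℕ} {σ : Fin n → Fin r}

theorem IsSuperpattern.exists_block_sublist_window (hσ : IsSuperpattern k σ) (hm : m ≠ 0)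
    (hmL : m * L ≤ k) (τ : Equiv.Perm (Fin k)) :
    ∃ c < m, ∃ a ≤ n, ∃ f : Fin k ↪o Fin r,
      (((List.ofFn τ).drop (c * L)).take L).map f <+ ((List.ofFn σ).drop a).take (n / m) := by
  obtain ⟨f, hf⟩ := (hσ τ).exists_orderEmbedding_sublist
  obtain ⟨c, hc, a, ha, hca⟩ := exists_block_sublist_window_of_sublist hf (N := n / m)
    (by simpa using hmL) (by simpa using Nat.lt_mul_div_succ n hm.pos)
  exact ⟨c, hc, a, by simpa using ha, f, by simpa using hca⟩

theorem IsSuperpattern.descFactorial_le (hσ : IsSuperpattern k σ) (hm : m ≠ 0)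
    (hmL : m * L ≤ k) :
    k.descFactorial L ≤ m * r.choose k *
      ∑ a ∈ range (n + 1), #((((List.ofFn σ).drop a).take (n / m)).sublistsLen L).toFinset := by
  let window (a : ℕ) : List (Fin r) := ((List.ofFn σ).drop a).take (n / m)
  have hLk : L ≤ k := (Nat.le_mul_of_pos_left L hm.pos).trans hmL
  let matching (q : ℕ × (Fin k ↪o Fin r) × ℕ) : Finset (Equiv.Perm (Fin k)) :=
    {τ | (((List.ofFn τ).drop (q.1 * L)).take L).map q.2.1 <+ window q.2.2}
  have hcover : univ ⊆ (range m ×ˢ univ ×ˢ range (n + 1)).biUnion matching := fun τ _ ↦ by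
    obtain ⟨c, hc, a, ha, f, hf⟩ := hσ.exists_block_sublist_window hm hmL τ
    exact mem_biUnion.2
      ⟨(c, f, a), by simp [hc, Nat.lt_succ_of_le ha], by simpa [matching] using hf⟩
  refine Nat.le_of_mul_le_mul_left ?_ (k - L).factorial_pos
  calc (k - L)! * k.descFactorial L
      = Fintype.card (Equiv.Perm (Fin k)) := by
        rw [Nat.factorial_mul_descFactorial hLk, Fintype.card_perm, Fintype.card_fin]
    _ ≤ ∑ q ∈ range m ×ˢ univ ×ˢ range (n + 1), #(matching q) :=
        (card_le_card hcover).trans card_biUnion_le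
    _ ≤ ∑ q ∈ range m ×ˢ (univ : Finset (Fin k ↪o Fin r)) ×ˢ range (n + 1),
          (k - L)! * #((window q.2.2).sublistsLen L).toFinset := by
        refine sum_le_sum fun ⟨c, f, a⟩ hq ↦ card_perm_map_block_sublist_le ?_ f.injective _
        have hc : c + 1 ≤ m := mem_range.1 (mem_product.1 hq).1
        calc c * L + L = (c + 1) * L := (add_one_mul c L).symm
          _ ≤ m * L := by gcongr
          _ ≤ k := hmL
    _ = (k - L)! * (m * r.choose k * ∑ a ∈ range (n + 1),
          #((window a).sublistsLen L).toFinset) := by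
        simp only [sum_product, sum_const, card_range, card_univ, smul_eq_mul, ← mul_sum,
          Fintype.card_eq_nat_card, card_orderEmbedding_fin, Nat.card_fin]
        ring

theorem IsSuperpattern.descFactorial_mul_pow_le {R : Type*} [CommSemiring R] [LinearOrder R]
    [IsStrictOrderedRing R] (hσ : IsSuperpattern k σ) (hm : m ≠ 0) (hmL : m * L ≤ k) {z : R}
    (hz₀ : 0 ≤ z) (hz₁ : z ≤ 1) :
    k.descFactorial L * z ^ (n / m) ≤
      m * r.choose k * (n + 1) * (∑ j ∈ range r, z ^ (j + 1)) ^ L := by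
  let window (a : ℕ) : List (Fin r) := ((List.ofFn σ).drop a).take (n / m)
  have hwindow (a : ℕ) : #((window a).sublistsLen L).toFinset * z ^ (n / m) ≤
      (∑ j ∈ range r, z ^ (j + 1)) ^ L := by
    have hbound := card_sublistsLen_mul_pow_length_le hz₀ hz₁ L (window a)
    rw [Fintype.card_fin] at hbound
    refine le_trans ?_ hbound
    gcongr ?_ * ?_
    exact pow_le_pow_of_le_one hz₀ hz₁ (List.length_take_le ..)
  calc (k.descFactorial L : R) * z ^ (n / m)
      ≤ (m * r.choose k * ∑ a ∈ range (n + 1), #((window a).sublistsLen L).toFinset : ℕ) *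
          z ^ (n / m) := by
        gcongr
        exact hσ.descFactorial_le hm hmL
    _ = m * r.choose k * ∑ a ∈ range (n + 1),
          #((window a).sublistsLen L).toFinset * z ^ (n / m) := by
        push_cast
        rw [mul_assoc, sum_mul]
    _ ≤ m * r.choose k * ∑ _ ∈ range (n + 1), (∑ j ∈ range r, z ^ (j + 1)) ^ L := by
        gcongr
        exact hwindow _
    _ = m * r.choose k * (n + 1) * (∑ j ∈ range r, z ^ (j + 1)) ^ L := by
        rw [sum_const, card_range, nsmul_eq_mul]
        push_cast
        ring

theorem IsSuperpattern.exp_mul_le {θ δ : ℝ} (hσ : IsSuperpattern k σ) (hm : 2 ≤ m)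
    (hmL : m * L ≤ k) (hk : 0 < k) (hkr : k ≤ r) (hr : r ≤ (1 + δ) * k) (hδ : δ ≤ 1)
    (hθ : 0 ≤ θ) :
    exp (L * (θ / 2 - θ ^ 2 / 2 - δ - 2 / m)) ≤
      m * r.choose k * (n + 1) * exp (θ * n / (k * m)) := by
  set A : ℝ := m * r.choose k * (n + 1)
  set c := δ - θ / 2 + θ ^ 2 / 2 with hc
  have hpow : exp (-(θ * n / (k * m))) ≤ exp (-(θ / k)) ^ (n / m) := by
    rw [← exp_nat_mul, exp_le_exp, mul_neg, neg_le_neg_iff, mul_comm, ← div_mul_div_comm]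
    gcongr
    exact Nat.cast_div_le
  have hcount : k.descFactorial L * exp (-(θ / k)) ^ (n / m) ≤ A * (k * exp c) ^ L := by
    refine (hσ.descFactorial_mul_pow_le (by lia) hmL (exp_pos _).le ?_).trans ?_
    · exact exp_le_one_iff.2 (neg_nonpos.2 (by positivity))
    · gcongr
      exact sum_range_exp_neg_div_pow_succ_le hθ hδ hk hkr hr
  have hscaled : (k : ℝ) ^ L * exp (-(θ * n / (k * m))) ≤
      k ^ L * (A * exp (L * (c + 2 / m))) := by
    calc (k : ℝ) ^ L * exp (-(θ * n / (k * m)))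
        ≤ k.descFactorial L * exp (L * (2 / m)) * exp (-(θ / k)) ^ (n / m) := by
          gcongr
          exact pow_le_descFactorial_mul_exp_of_mul_le hk hm hmL
      _ = k.descFactorial L * exp (-(θ / k)) ^ (n / m) * exp (L * (2 / m)) := by ring
      _ ≤ A * (k * exp c) ^ L * exp (L * (2 / m)) := by gcongr
      _ = k ^ L * (A * exp (L * (c + 2 / m))) := by
        rw [mul_pow, ← exp_nat_mul, mul_add _ c, exp_add]
        ring
  have hcancel : exp (-(θ * n / (k * m))) ≤ A * exp (L * (c + 2 / m)) :=
    le_of_mul_le_mul_left hscaled (by positivity)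
  calc exp (L * (θ / 2 - θ ^ 2 / 2 - δ - 2 / m))
      = exp (-(θ * n / (k * m))) * exp (-(L * (c + 2 / m))) * exp (θ * n / (k * m)) := by
        rw [← exp_add, ← exp_add, hc]
        ring_nf
    _ ≤ A * exp (L * (c + 2 / m)) * exp (-(L * (c + 2 / m))) * exp (θ * n / (k * m)) := by gcongr
    _ = A * exp (θ * n / (k * m)) := by
        rw [mul_assoc A, ← exp_add, add_neg_cancel, exp_zero, mul_one]

theorem IsSuperpattern.exp_mul_le_mul_sq {ε δ : ℝ} (hσ : IsSuperpattern k σ) (hε : 0 < ε)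
    (hm : 16 ≤ ε ^ 2 * m) (hδ₀ : 0 ≤ δ) (hδ : δ ≤ ε ^ 2 / 8) (hkr : k ≤ r)
    (hr : r ≤ (1 + δ) * k) (hn : n < (1 / 2 - ε) * k ^ 2)
    (hchoose : r.choose k ≤ exp (ε ^ 2 / (8 * m) * k)) :
    exp (ε ^ 2 / (8 * m) * k) ≤ m * exp 1 * k ^ 2 := by
  have hk : 0 < k := Nat.pos_of_ne_zero fun hk ↦ hn.not_ge (by simp [hk])
  have hε₂ : ε < 1 / 2 :=
    sub_pos.1 <| pos_of_mul_pos_left (n.cast_nonneg.trans_lt hn) (by positivity)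
  have hm₂ : 2 ≤ m := by exact_mod_cast (by nlinarith : (2 : ℝ) ≤ m)
  have hmε : 2 / (m : ℝ) ≤ ε ^ 2 / 8 := by
    rw [div_le_div_iff₀ (by positivity) (by norm_num)]
    linarith
  have hnk : (n : ℝ) + 1 ≤ k ^ 2 := by
    exact_mod_cast hn.trans_le (mul_le_of_le_one_left (by positivity) (by linarith))
  /- The errors `δ` and `2 / m` cost at most `ε ^ 2 / 8` each, so the exponent gained per letter of
  a block exceeds the `ε * (1 / 2 - ε)` charged to the length of the window by `ε ^ 2 / 4`. Half of
  this surplus pays for `r.choose k`. -/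
  set E := ε * n / (k * m)
  set κ := ε ^ 2 / (8 * m)
  set c := ε / 2 - ε ^ 2 / 2 - δ - 2 / m with hc_def
  have hc : ε / 2 - 3 / 4 * ε ^ 2 ≤ c := by linarith
  have hc₀ : 0 ≤ c := le_trans (by nlinarith) hc
  have hc₁ : c ≤ 1 := by nlinarith [(by positivity : 0 ≤ 2 / (m : ℝ))]
  have hscaled : exp (κ * k) * (exp (κ * k) * exp E) ≤
      m * exp 1 * k ^ 2 * (exp (κ * k) * exp E) := by
    calc exp (κ * k) * (exp (κ * k) * exp E) = exp 1 * exp (2 * (κ * k) - 1 + E) := by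
          rw [← exp_add, ← exp_add, ← exp_add]
          ring_nf
      _ ≤ exp 1 * exp ((k / m : ℕ) * c) := by
          gcongr
          exact two_mul_sub_one_add_le_div_mul hε.le (by lia) hk hn.le hc₀ hc₁ hc
      _ ≤ exp 1 * (m * r.choose k * (n + 1) * exp E) := by
          gcongr
          exact hσ.exp_mul_le hm₂ (Nat.mul_div_le k m) hk hkr hr (by nlinarith) hε.le
      _ ≤ exp 1 * (m * exp (κ * k) * k ^ 2 * exp E) := by gcongr
      _ = m * exp 1 * k ^ 2 * (exp (κ * k) * exp E) := by ring
  exact le_of_mul_le_mul_right hscaled (by positivity)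

end Superpattern

/-- For every `ε > 0` there exists `δ > 0` such that for all sufficiently large `k`:
with `r = ⌊(1+δ)k⌋`, for every `n < (1/2 − ε)k²`, no word `σ ∈ [r]^n` is a
`k`-superpattern. -/
theorem no_short_superpattern_on_small_alphabet :
    ∀ ε : ℝ, 0 < ε → ∃ δ : ℝ, 0 < δ ∧ ∃ K : ℕ, ∀ k : ℕ, K ≤ k →
      ∀ n : ℕ, (n : ℝ) < (1/2 - ε) * (k : ℝ)^2 →
        ∀ σ : Fin n → Fin (⌊(1 + δ) * (k : ℝ)⌋₊), ¬ IsSuperpattern k σ := by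
  intro ε hε
  obtain ⟨m, hm⟩ := exists_nat_ge (16 / ε ^ 2)
  have hm₀ : (0 : ℝ) < m := lt_of_lt_of_le (by positivity) hm
  rw [div_le_iff₀' (by positivity)] at hm
  have hκ : 0 < ε ^ 2 / (8 * m) := by positivity
  have hδ_small : Set.Ioc 0 (ε ^ 2 / 8) ∈ 𝓝[>] 0 := Ioc_mem_nhdsGT (by positivity)
  obtain ⟨δ, hchoose, hδ₀, hδ⟩ := ((eventually_choose_le_exp_mul hκ).and hδ_small).exists
  obtain ⟨K, hK⟩ := eventually_atTop.1 (eventually_mul_pow_lt_exp_mul (m * exp 1) 2 hκ)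
  refine ⟨δ, hδ₀, K, fun k hKk n hn σ hσ ↦ ?_⟩
  have hr : (⌊(1 + δ) * (k : ℝ)⌋₊ : ℝ) ≤ (1 + δ) * k := Nat.floor_le (by positivity)
  have hkr : k ≤ ⌊(1 + δ) * (k : ℝ)⌋₊ :=
    Nat.le_floor (le_mul_of_one_le_left k.cast_nonneg (by linarith))
  exact (hK k hKk).not_ge <|
    hσ.exp_mul_le_mul_sq hε hm hδ₀.le hδ hkr hr hn (hchoose k _ hr)
end

section
/- For every word σ ∈ [k]^n and every permutation τ ∈ S_k, τ is a pattern of σ if and only if c_{A_σ}(0, τ) ≤ n, where τ is read as the word τ(1),…,τ(k) and c_{A_σ} is the cost function of the weighted DFA A_σ. -/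
/-- A weighted DFA on the alphabet `[k]` (modelled as `Fin k`) with state type `V`:
a transition function, a root state, and a cost function into `ℕ∞`. -/
structure WDFA (k : ℕ) (V : Type*) where
  trans : V → Fin k → V
  root : V
  cost : V → Fin k → ℕ∞

/-- The final state of the walk from `v` reading the word `w`. -/
def WDFA.walkEnd {k : ℕ} {V : Type*} (D : WDFA k V) : V → List (Fin k) → V
  | v, [] => v
  | v, t :: w => D.walkEnd (D.trans v t) w

/-- The cost of reading the word `w` starting from state `v`. -/
def WDFA.wordCost {k : ℕ} {V : Type*} (D : WDFA k V) : V → List (Fin k) → ℕ∞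
  | _, [] => 0
  | v, t :: w => D.cost v t + D.wordCost (D.trans v t) w

/-- A `k`-DFA: a weighted DFA on alphabet `[k]` in which, at every state `v`, the
costs `c(v, ·)` form a bijection onto `{1, …, k}`. -/
def WDFA.IsKDFA {k : ℕ} {V : Type*} (D : WDFA k V) : Prop :=
  ∀ v : V, ∃ π : Equiv.Perm (Fin k), ∀ t : Fin k, D.cost v t = (((π t : ℕ) + 1 : ℕ) : ℕ∞)

/-- A permutation `τ ∈ S_k` read as the word `τ(1), …, τ(k)`. -/
def permWord {k : ℕ} (τ : Equiv.Perm (Fin k)) : List (Fin k) :=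
  (List.finRange k).map τ

/-- The greedy weighted DFA `A_σ` associated to `σ ∈ [k]^n`: states `{0, 1, …, n}`
(modelled as `Fin (n+1)`), root `0`; reading letter `t` at state `v` jumps to the
least position `> v` where `σ` takes value `t` (costing the distance travelled),
and costs `∞` (staying put) if there is no such position. -/
def greedyDFA {k n : ℕ} (σ : Fin n → Fin k) : WDFA k (Fin (n + 1)) where
  root := 0
  trans v t := WithBot.recBotCoe v (fun u => u.succ)
    ((Finset.univ.filter fun i : Fin n => (v : ℕ) ≤ (i : ℕ) ∧ σ i = t).min)
  cost v t := WithBot.recBotCoe ⊤ (fun u => (((u : ℕ) + 1 - (v : ℕ) : ℕ) : ℕ∞))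
    ((Finset.univ.filter fun i : Fin n => (v : ℕ) ≤ (i : ℕ) ∧ σ i = t).min)

/-! If a letter `t` occurs in `σ` beyond position `v`, let `u` be its first occurrence there: any
continuation available after a later occurrence of `t` is also available after `u`. So reading a
word in `A_σ` finds its leftmost embedding into `σ` as a subsequence, and the accumulated cost is
the last position used; it is at most `n` when an embedding exists and `∞` otherwise. Since `σ` has
only `k` letters and `τ` uses each of them, order-isomorphic to `τ` means equal to `τ`, so an
occurrence of the pattern `τ` in `σ` is an embedding of the word `τ`. -/

/-- The indices at which the letter `t` occurs in the word `σ` once its first `v` letters are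
dropped. Indices count from `0`, so these are the positions that `greedyDFA σ` may jump to from the
state `v`. -/
def occurrencesFrom {α : Type*} {n : ℕ} (σ : Fin n → α) (v : ℕ) (t : α) : Set (Fin n) :=
  {i | v ≤ i ∧ σ i = t}

section Subsequences

variable {α : Type*} {n : ℕ}

theorem cons_sublist_iff_exists_getElem? {a : α} {w l : List α} :
    (a :: w).Sublist l ↔ ∃ i : ℕ, l[i]? = some a ∧ w.Sublist (l.drop (i + 1)) := by
  constructor
  · rw [List.cons_sublist_iff]
    rintro ⟨r₁, r₂, rfl, ha, hw⟩
    obtain ⟨i, hi, rfl⟩ := List.getElem_of_mem ha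
    refine ⟨i, by simp [List.getElem?_append_left hi], hw.trans ?_⟩
    rw [List.drop_append_of_le_length hi]
    exact List.sublist_append_right _ _
  · rintro ⟨i, hi, hw⟩
    obtain ⟨hlt, rfl⟩ := List.getElem?_eq_some_iff.mp hi
    have hcons : (l[i] :: w).Sublist (l.drop i) :=
      List.getElem_cons_drop hlt ▸ hw.cons_cons _
    exact hcons.trans (List.drop_sublist i l)

theorem cons_sublist_drop_ofFn_iff {σ : Fin n → α} {v : ℕ} {t : α} {w : List α} :
    (t :: w).Sublist ((List.ofFn σ).drop v) ↔
      ∃ i ∈ occurrencesFrom σ v t, w.Sublist ((List.ofFn σ).drop (i + 1)) := by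
  simp only [cons_sublist_iff_exists_getElem?, List.getElem?_drop, List.drop_drop]
  constructor
  · rintro ⟨i, ht, hw⟩
    obtain ⟨hi, rfl⟩ := List.getElem?_eq_some_iff.mp ht
    rw [List.length_ofFn] at hi
    exact ⟨⟨v + i, hi⟩, ⟨Nat.le_add_right v i, by simp⟩, by simpa only [add_assoc] using hw⟩
  · rintro ⟨i, ⟨hvi, rfl⟩, hw⟩
    obtain ⟨j, hj⟩ := Nat.exists_eq_add_of_le hvi
    exact ⟨j, by simp [← hj], by rwa [← add_assoc, ← hj]⟩

theorem cons_sublist_drop_ofFn_iff_of_isLeast {σ : Fin n → α} {v : ℕ} {t : α} {w : List α}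
    {u : Fin n} (hu : IsLeast (occurrencesFrom σ v t) u) :
    (t :: w).Sublist ((List.ofFn σ).drop v) ↔ w.Sublist ((List.ofFn σ).drop (u + 1)) := by
  rw [cons_sublist_drop_ofFn_iff]
  refine ⟨?_, fun hw => ⟨u, hu.1, hw⟩⟩
  rintro ⟨i, hi, hw⟩
  have hui : (u : ℕ) ≤ i := hu.2 hi
  exact hw.trans (List.drop_sublist_drop_left _ (Nat.succ_le_succ hui))

theorem sublist_finRange_iff_sortedLT {l : List (Fin n)} :
    l.Sublist (List.finRange n) ↔ l.SortedLT := by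
  refine ⟨fun h => ((List.sortedLT_finRange n).pairwise.sublist h).sortedLT, fun h => ?_⟩
  have hsubperm : l.Subperm (List.finRange n) :=
    List.subperm_of_subset h.nodup fun i _ => List.mem_finRange i
  exact List.sublist_of_subperm_of_sortedLE hsubperm h.sortedLE (List.sortedLT_finRange n).sortedLE

theorem ofFn_sublist_ofFn_iff {m : ℕ} {f : Fin m → α} {g : Fin n → α} :
    (List.ofFn f).Sublist (List.ofFn g) ↔
      ∃ i : Fin m → Fin n, StrictMono i ∧ ∀ j, g (i j) = f j := by
  simp only [List.ofFn_eq_map (f := g), List.sublist_map_iff, sublist_finRange_iff_sortedLT]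
  constructor
  · rintro ⟨p, hp, hfp⟩
    obtain rfl : m = p.length := by simpa using congrArg List.length hfp
    have hgp : List.ofFn (g ∘ p.get) = List.ofFn f := by
      rw [← List.map_ofFn, List.ofFn_get, hfp]
    exact ⟨p.get, hp.strictMono_get, congrFun (List.ofFn_injective hgp)⟩
  · rintro ⟨i, hi, hgi⟩
    refine ⟨List.ofFn i, hi.sortedLT_ofFn, ?_⟩
    rw [List.map_ofFn, funext hgi (f := g ∘ i)]

end Subsequences

section Patterns

theorem eq_equiv_of_lt_imp_lt {ι α : Type*} [LinearOrder α] [WellFoundedLT α] [WellFoundedGT α]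
    {f : ι → α} {g : ι ≃ α} (h : ∀ j j', g j < g j' → f j < f j') (j : ι) : f j = g j := by
  have hmono : StrictMono (f ∘ g.symm) := fun x y hxy => h _ _ (by simpa using hxy)
  simpa using le_antisymm (hmono.apply_le (x := g j)) hmono.le_apply

theorem permWord_eq_ofFn {k : ℕ} (τ : Equiv.Perm (Fin k)) : permWord τ = List.ofFn τ :=
  List.ofFn_eq_map.symm

theorem containsPattern_iff_permWord_sublist {k n : ℕ} {σ : Fin n → Fin k}
    {τ : Equiv.Perm (Fin k)} : ContainsPattern σ τ ↔ (permWord τ).Sublist (List.ofFn σ) := by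
  rw [permWord_eq_ofFn, ofFn_sublist_ofFn_iff]
  refine exists_congr fun i => and_congr_right fun _ => ⟨fun h => ?_, fun h j j' => by rw [h, h]⟩
  exact eq_equiv_of_lt_imp_lt fun j j' => (h j j').mpr

end Patterns

section GreedyDFA

theorem min_filter_univ_eq_of_isLeast {ι : Type*} [Fintype ι] [LinearOrder ι] {p : ι → Prop}
    [DecidablePred p] {u : ι} (hu : IsLeast {i | p i} u) : (Finset.univ.filter p).min = u :=
  le_antisymm (Finset.min_le (by simpa using hu.1))
    (Finset.le_min fun i hi => WithTop.coe_le_coe.mpr (hu.2 (by simpa using hi)))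

variable {k n : ℕ} {σ : Fin n → Fin k} {v : Fin (n + 1)} {t : Fin k} {u : Fin n}

theorem greedyDFA_cost_eq_top (h : occurrencesFrom σ v t = ∅) : (greedyDFA σ).cost v t = ⊤ := by
  have hmin : (Finset.univ.filter fun i : Fin n => (v : ℕ) ≤ i ∧ σ i = t).min = ⊤ :=
    Finset.min_eq_top.mpr (by simpa [occurrencesFrom, ← Finset.coe_eq_empty] using h)
  -- `greedyDFA` applies `WithBot.recBotCoe` to `Finset.min`, which lives in `WithTop`: its value is
  -- found by `rfl`, as the `recBotCoe` simp lemmas do not match.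
  simp only [greedyDFA]
  rw [hmin]
  rfl

theorem greedyDFA_trans_of_isLeast (hu : IsLeast (occurrencesFrom σ v t) u) :
    (greedyDFA σ).trans v t = u.succ := by
  simp only [greedyDFA]
  rw [min_filter_univ_eq_of_isLeast hu]
  rfl

theorem greedyDFA_cost_of_isLeast (hu : IsLeast (occurrencesFrom σ v t) u) :
    (greedyDFA σ).cost v t = ((u + 1 - v : ℕ) : ℕ∞) := by
  simp only [greedyDFA]
  rw [min_filter_univ_eq_of_isLeast hu]
  rfl

theorem add_greedyDFA_cost_of_isLeast (hu : IsLeast (occurrencesFrom σ v t) u) :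
    ((v : ℕ) : ℕ∞) + (greedyDFA σ).cost v t = (u.succ : ℕ) := by
  have hvu : (v : ℕ) ≤ u + 1 := Nat.le_succ_of_le hu.1.1
  rw [greedyDFA_cost_of_isLeast hu, ← Nat.cast_add, Nat.add_sub_cancel' hvu, Fin.val_succ]

theorem add_greedyDFA_wordCost_le_iff (σ : Fin n → Fin k) (w : List (Fin k)) (v : Fin (n + 1)) :
    ((v : ℕ) : ℕ∞) + (greedyDFA σ).wordCost v w ≤ n ↔ w.Sublist ((List.ofFn σ).drop v) := by
  induction w generalizing v with
  | nil => simp [WDFA.wordCost, v.is_le]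
  | cons t w ih =>
    rw [WDFA.wordCost, ← add_assoc]
    rcases (occurrencesFrom σ v t).eq_empty_or_nonempty with hnone | hsome
    · simp [greedyDFA_cost_eq_top hnone, cons_sublist_drop_ofFn_iff, hnone]
    · obtain ⟨u, hu⟩ := exists_minimal_of_wellFoundedLT (· ∈ occurrencesFrom σ v t) hsome
      have hu : IsLeast (occurrencesFrom σ v t) u := minimal_iff_isLeast.mp hu
      rw [add_greedyDFA_cost_of_isLeast hu, greedyDFA_trans_of_isLeast hu, ih, Fin.val_succ,
        cons_sublist_drop_ofFn_iff_of_isLeast hu]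

end GreedyDFA

/-- `σ ∈ [k]^n` contains `τ ∈ S_k` as a pattern iff the cost of reading the word
`τ(1), …, τ(k)` from the root of `A_σ` is at most `n`. -/
theorem containsPattern_iff_greedyDFA_cost_le (k n : ℕ) (σ : Fin n → Fin k)
    (τ : Equiv.Perm (Fin k)) :
    ContainsPattern σ τ ↔
      (greedyDFA σ).wordCost (greedyDFA σ).root (permWord τ) ≤ (n : ℕ∞) := by
  have hroot : (greedyDFA σ).root = 0 := rfl
  rw [containsPattern_iff_permWord_sublist, hroot]
  simpa using (add_greedyDFA_wordCost_le_iff σ (permWord τ) 0).symm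
end

section
/- Let D be a k-DFA with state set V, let ε > 0, and let L = L_0 + L_1 + ⋯ + L_M be positive integers with L ≤ k. Then P(v, L, ε) ≤ P(v, L_0, ε) + Σ_{u ∈ V} Σ_{m=1}^{M} P(u, L_m, ε) for every state v ∈ V. -/
/-- A function-word `w : Fin L → Fin k` viewed as a list `w(1), …, w(L)`. -/
def listOf {k L : ℕ} (w : Fin L → Fin k) : List (Fin k) :=
  (List.finRange L).map w

/-- `P(v, L, ε)`: the probability that `c(v, w) < (1/2 − ε)kL` for a uniformly random
permutational (injective) word `w` of length `L` on `[k]`, expressed as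
(number of such words) · (k−L)!/k!. A cost of `∞` is never `< (1/2 − ε)kL`. -/
noncomputable def badProb {k : ℕ} {V : Type*} (D : WDFA k V) (v : V) (L : ℕ) (ε : ℝ) : ℝ :=
  (Nat.card {w : Fin L → Fin k // Function.Injective w ∧
      ∃ m : ℕ, D.wordCost v (listOf w) = (m : ℕ∞) ∧ (m : ℝ) < (1/2 - ε) * k * L} : ℝ)
    * (Nat.factorial (k - L)) / (Nat.factorial k)

/-!
A uniformly random injective word of length `a + b` restricts to a uniformly random injective
word on its first `a` positions, and likewise on its last `b`: restriction commutes with the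
action of `Perm (Fin k)` on letters, which is transitive on injective words of each length, so
all its fibres have the same size. If a word is below its cost threshold then so is its prefix
or its suffix, because costs and thresholds are both additive; the state from which the suffix is
read depends on the prefix, which a union bound over all states absorbs. This settles two
blocks, and the general case follows by splitting off the last block.
-/

open Finset Function

open scoped Classical in
theorem dens_filter_mulActionHom {G X Y : Type*} [Group G] [MulAction G X] [MulAction G Y]
    [MulAction.IsPretransitive G Y] [Fintype X] [Nonempty X] [Fintype Y] (φ : X →[G] Y)
    (p : Y → Prop) :
    dens {x | p (φ x)} = dens {y | p y} := by
  obtain ⟨x₀⟩ := ‹Nonempty X›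
  have card_fiber (y : Y) : #{x | φ x = y} = #{x | φ x = φ x₀} := by
    obtain ⟨g, rfl⟩ := MulAction.exists_smul_eq G (φ x₀) y
    exact card_equiv (MulAction.toPerm g⁻¹) fun x ↦ by simp [inv_smul_eq_iff]
  have card_preimage (q : Y → Prop) : #{x | q (φ x)} = #{y | q y} * #{x | φ x = φ x₀} := by
    rw [card_eq_sum_card_fiberwise (f := φ) (t := {y | q y}) (by simp [Set.MapsTo])]
    refine sum_const_nat fun y hy ↦ ?_
    rw [← card_fiber y, filter_filter]
    congr! 2 with x
    simp_all
  have card_domain : Fintype.card X = Fintype.card Y * #{x | φ x = φ x₀} := by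
    simpa using card_preimage fun _ ↦ True
  have fiber_ne_zero : (#{x | φ x = φ x₀} : ℚ≥0) ≠ 0 :=
    Nat.cast_ne_zero.2 (card_ne_zero_of_mem (a := x₀) (by simp))
  rw [dens_eq_card_div_card, dens_eq_card_div_card, card_preimage, card_domain]
  push_cast
  exact mul_div_mul_right _ _ fiber_ne_zero

open scoped Classical in
theorem dens_filter_embedding_trans {α β γ : Type*} [Fintype α] [Fintype β] [Fintype γ]
    [Nonempty (β ↪ γ)] (e : α ↪ β) (p : (α ↪ γ) → Prop) :
    dens {f : β ↪ γ | p (e.trans f)} = dens {f : α ↪ γ | p f} :=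
  have : MulAction.IsPretransitive (Equiv.Perm γ) (α ↪ γ) := ⟨Equiv.Perm.exists_smul_eq_embedding⟩
  dens_filter_mulActionHom (MulActionHom.embMap (Equiv.Perm γ) γ e) p

theorem length_listOf {k L : ℕ} (w : Fin L → Fin k) : (listOf w).length = L := by
  simp [listOf]

theorem listOf_add {k a b : ℕ} (w : Fin (a + b) → Fin k) :
    listOf w = listOf (w ∘ Fin.castAdd b) ++ listOf (w ∘ Fin.natAdd a) := by
  simp only [listOf, ← List.ofFn_eq_map]
  exact List.ofFn_add

namespace WDFA

variable {k : ℕ} {V : Type*}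

theorem wordCost_append (D : WDFA k V) (v : V) (x y : List (Fin k)) :
    D.wordCost v (x ++ y) = D.wordCost v x + D.wordCost (D.walkEnd v x) y := by
  induction x generalizing v with
  | nil => simp [wordCost, walkEnd]
  | cons t x ih => simp [wordCost, walkEnd, ih, add_assoc]

/-- The word `w` is cheap from `v` if `c(v, w) < (1/2 - ε) k |w|`, the event whose probability
is `badProb`; in particular `c(v, w)` is finite. -/
def IsCheap (D : WDFA k V) (ε : ℝ) (v : V) (w : List (Fin k)) : Prop :=
  ∃ m : ℕ, D.wordCost v w = (m : ℕ∞) ∧ (m : ℝ) < (1/2 - ε) * k * w.length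

theorem IsCheap.left_or_right_of_append {D : WDFA k V} {ε : ℝ} {v : V} {x y : List (Fin k)}
    (h : D.IsCheap ε v (x ++ y)) :
    D.IsCheap ε v x ∨ D.IsCheap ε (D.walkEnd v x) y := by
  obtain ⟨m, hm, hlt⟩ := h
  rw [wordCost_append] at hm
  obtain ⟨hx, hy⟩ := WithTop.add_ne_top.1 (hm ▸ ENat.natCast_ne_top m)
  lift D.wordCost v x to ℕ using hx with m₁ h₁
  lift D.wordCost (D.walkEnd v x) y to ℕ using hy with m₂ h₂
  obtain rfl : m₁ + m₂ = m := by exact_mod_cast hm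
  by_contra! not_cheap
  have h₁_le : (1/2 - ε) * k * x.length ≤ m₁ := not_lt.1 fun hlt₁ ↦ not_cheap.1 ⟨m₁, h₁.symm, hlt₁⟩
  have h₂_le : (1/2 - ε) * k * y.length ≤ m₂ := not_lt.1 fun hlt₂ ↦ not_cheap.2 ⟨m₂, h₂.symm, hlt₂⟩
  push_cast [List.length_append] at hlt
  linarith

end WDFA

section BadProb

variable {k : ℕ} {V : Type*}

open scoped Classical in
theorem badProb_eq_dens (D : WDFA k V) (v : V) {L : ℕ} (hL : L ≤ k) (ε : ℝ) :
    badProb D v L ε = dens {w : Fin L ↪ Fin k | D.IsCheap ε v (listOf w)} := by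
  have card_cheap : Nat.card {w : Fin L → Fin k // Injective w ∧
      ∃ m : ℕ, D.wordCost v (listOf w) = (m : ℕ∞) ∧ (m : ℝ) < (1/2 - ε) * k * L} =
      #{w : Fin L ↪ Fin k | D.IsCheap ε v (listOf w)} := by
    rw [← Fintype.card_subtype, ← Nat.card_eq_fintype_card]
    simp only [WDFA.IsCheap, length_listOf]
    exact Nat.card_congr <| (Equiv.subtypeSubtypeEquivSubtypeInter _ _).symm.trans <|
      (Equiv.subtypeInjectiveEquivEmbedding _ _).subtypeEquiv fun _ ↦ Iff.rfl
  have card_words : ((k - L).factorial : ℝ) * Fintype.card (Fin L ↪ Fin k) = k.factorial := by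
    rw [Fintype.card_embedding_eq, Fintype.card_fin, Fintype.card_fin]
    exact_mod_cast Nat.factorial_mul_descFactorial hL
  rw [badProb, card_cheap, nnratCast_dens, ← card_words, mul_comm]
  exact mul_div_mul_left _ _ (by positivity)

theorem badProb_add_le [Fintype V] (D : WDFA k V) (v : V) {a b : ℕ} (hab : a + b ≤ k) (ε : ℝ) :
    badProb D v (a + b) ε ≤ badProb D v a ε + ∑ u, badProb D u b ε := by
  classical
  have : Nonempty (Fin (a + b) ↪ Fin k) := ⟨Fin.castLEEmb hab⟩
  let cheapPrefix : Finset (Fin (a + b) ↪ Fin k) :=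
    {w | D.IsCheap ε v (listOf ((Fin.castAddEmb b).trans w))}
  let cheapSuffix (u : V) : Finset (Fin (a + b) ↪ Fin k) :=
    {w | D.IsCheap ε u (listOf ((Fin.natAddEmb a).trans w))}
  have cheap_subset : ({w | D.IsCheap ε v (listOf w)} : Finset (Fin (a + b) ↪ Fin k)) ⊆
      cheapPrefix ∪ univ.biUnion cheapSuffix := by
    intro w hw
    rw [mem_filter_univ, listOf_add] at hw
    simp only [cheapPrefix, cheapSuffix, mem_union, mem_biUnion, mem_filter_univ, mem_univ,
      true_and]
    exact hw.left_or_right_of_append.imp id fun h ↦ ⟨_, h⟩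
  have dens_prefix : badProb D v a ε = dens cheapPrefix := by
    rw [badProb_eq_dens D v (by omega) ε, ← dens_filter_embedding_trans (Fin.castAddEmb b)]
  have dens_suffix (u : V) : badProb D u b ε = dens (cheapSuffix u) := by
    rw [badProb_eq_dens D u (by omega) ε, ← dens_filter_embedding_trans (Fin.natAddEmb a)]
  simp only [badProb_eq_dens D v hab ε, dens_prefix, dens_suffix]
  exact_mod_cast calc
    dens {w : Fin (a + b) ↪ Fin k | D.IsCheap ε v (listOf w)}
      ≤ dens (cheapPrefix ∪ univ.biUnion cheapSuffix) := dens_le_dens cheap_subset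
    _ ≤ dens cheapPrefix + dens (univ.biUnion cheapSuffix) := dens_union_le _ _
    _ ≤ dens cheapPrefix + ∑ u, dens (cheapSuffix u) := by gcongr; exact dens_biUnion_le

end BadProb

theorem badProb_le_sum_of_decomposition_general {k M : ℕ} {V : Type*} [Fintype V] (D : WDFA k V)
    (ε : ℝ) (Ls : Fin (M + 1) → ℕ) (hsum : ∑ m, Ls m ≤ k) (v : V) :
    badProb D v (∑ m, Ls m) ε ≤
      badProb D v (Ls 0) ε + ∑ u : V, ∑ m : Fin M, badProb D u (Ls m.succ) ε := by
  induction M with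
  | zero => simp
  | succ M ih =>
    rw [Fin.sum_univ_castSucc] at hsum ⊢
    calc
      badProb D v (∑ m : Fin (M + 1), Ls m.castSucc + Ls (Fin.last _)) ε
        ≤ badProb D v (∑ m : Fin (M + 1), Ls m.castSucc) ε +
            ∑ u, badProb D u (Ls (Fin.last _)) ε := badProb_add_le D v hsum ε
      _ ≤ badProb D v (Ls 0) ε + ∑ u, ∑ m : Fin M, badProb D u (Ls m.succ.castSucc) ε +
            ∑ u, badProb D u (Ls (Fin.last _)) ε := by
        gcongr
        exact ih (fun m ↦ Ls m.castSucc) (by omega)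
      _ = badProb D v (Ls 0) ε + ∑ u, ∑ m : Fin (M + 1), badProb D u (Ls m.succ) ε := by
        simp only [Fin.sum_univ_castSucc, Fin.succ_castSucc, Fin.succ_last, sum_add_distrib,
          add_assoc]

/-- Splitting lemma: for a `k`-DFA `D` and a decomposition `L = L_0 + L_1 + ⋯ + L_M`
of positive integers with `L ≤ k`,
`P(v, L, ε) ≤ P(v, L_0, ε) + Σ_{u ∈ V} Σ_{m=1}^{M} P(u, L_m, ε)`. -/
theorem badProb_le_sum_of_decomposition (k M : ℕ) {V : Type*} [Fintype V]
    (D : WDFA k V) (hD : D.IsKDFA) (ε : ℝ) (hε : 0 < ε)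
    (Ls : Fin (M + 1) → ℕ) (hpos : ∀ m, 0 < Ls m) (hsum : (∑ m, Ls m) ≤ k) (v : V) :
    badProb D v (∑ m, Ls m) ε ≤
      badProb D v (Ls 0) ε + ∑ u : V, ∑ m : Fin M, badProb D u (Ls m.succ) ε :=
  badProb_le_sum_of_decomposition_general D ε Ls hsum v
end

section
/- Let D be a k-DFA, let ε > 0, and let L ≤ k be a positive integer. Then P(L, ε) ≤ (k^L · (k−L)! / k!) · exp(−ε²L/4). -/
/-!
Reading a word `w` from a state `v` of a `k`-DFA turns its letters into costs, and since every state
permutes `{1, …, k}`, the cost sequence determines `w`. So the cost of a uniformly random word is a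
sum of independent uniform variables on `{1, …, k}`, and Hoeffding's inequality bounds the number of
cheap words by `k ^ L * exp (-2 * ε ^ 2 * L)`. The cheap injective words are among
these; dividing by the number `k! / (k - L)!` of injective words gives the stated prefactor.
-/

open MeasureTheory ProbabilityTheory

section Hoeffding

variable {ι α : Type*} [Fintype ι] {a b δ : ℝ}

theorem measureReal_pi_sum_le_le_exp [MeasurableSpace α] {μ : Measure α} [IsProbabilityMeasure μ]
    {f : α → ℝ} (hfm : AEMeasurable f μ) (hf : ∀ᵐ x ∂μ, f x ∈ Set.Icc a b) (hδ : 0 ≤ δ) :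
    (Measure.pi fun _ : ι ↦ μ).real {u | ∑ i, f (u i) ≤ Fintype.card ι * (μ[f] - δ)} ≤
      Real.exp (-2 * Fintype.card ι * δ ^ 2 / (b - a) ^ 2) := by
  let Y : α → ℝ := fun x ↦ -(f x - μ[f])
  let P : Measure (ι → α) := Measure.pi fun _ ↦ μ
  have indep : iIndepFun (fun i u ↦ Y (u i)) P := iIndepFun_pi fun _ ↦ (hfm.sub_const _).neg
  have subgaussian (i : ι) : HasSubgaussianMGF (fun u ↦ Y (u i)) ((‖b - a‖₊ / 2) ^ 2) P := by
    have map_eval : P.map (Function.eval i) = μ :=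
      (measurePreserving_eval (fun _ : ι ↦ μ) i).map_eq
    refine .of_map (X := Y) (measurable_pi_apply i).aemeasurable ?_
    rw [map_eval]
    exact (hasSubgaussianMGF_of_mem_Icc hfm hf).neg
  have event_eq : {u : ι → α | ∑ i, f (u i) ≤ Fintype.card ι * (μ[f] - δ)} =
      {u | Fintype.card ι * δ ≤ ∑ i, Y (u i)} := by
    ext u
    simp only [Y, Set.mem_ofPred_eq, Finset.sum_neg_distrib, Finset.sum_sub_distrib,
      Finset.sum_const, Finset.card_univ, nsmul_eq_mul]
    constructor <;> intro h <;> linarith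
  rw [event_eq]
  refine (HasSubgaussianMGF.measure_sum_ge_le_of_iIndepFun indep (fun i _ ↦ subgaussian i)
    (by positivity)).trans_eq (congrArg Real.exp ?_)
  simp only [Finset.sum_const, Finset.card_univ, nsmul_eq_mul, NNReal.coe_mul, NNReal.coe_natCast,
    NNReal.coe_pow, NNReal.coe_div, coe_nnnorm, Real.norm_eq_abs, NNReal.coe_ofNat, div_pow, sq_abs]
  field_simp

theorem uniformOn_univ_real [Fintype α] [MeasurableSpace α] [MeasurableSingletonClass α]
    (s : Set α) : (uniformOn Set.univ).real s = Nat.card s / Fintype.card α := by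
  rw [measureReal_def, uniformOn_univ, ENNReal.toReal_div, ENNReal.toReal_natCast,
    Measure.count_apply_finite s s.toFinite, ENNReal.toReal_natCast, Nat.card_coe_set_eq,
    Set.ncard_eq_toFinset_card s]

theorem card_sum_le_le_exp [Fintype α] [Nonempty α] {f : α → ℝ} (hf : ∀ x, f x ∈ Set.Icc a b)
    (hδ : 0 ≤ δ) :
    (Nat.card {u : ι → α //
        ∑ i, f (u i) ≤ Fintype.card ι * ((∑ x, f x) / Fintype.card α - δ)} : ℝ) ≤
      (Fintype.card α : ℝ) ^ Fintype.card ι *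
        Real.exp (-2 * Fintype.card ι * δ ^ 2 / (b - a) ^ 2) := by
  classical
  let _ : MeasurableSpace α := ⊤
  let μ : Measure α := uniformOn Set.univ
  have mean : μ[f] = (∑ x, f x) / Fintype.card α := by
    simp [μ, integral_fintype .of_finite, uniformOn_univ_real, Finset.mul_sum, div_eq_inv_mul]
  have pi_eq : (Measure.pi fun _ : ι ↦ μ) = uniformOn Set.univ := by
    rw [← uniformOn_pi, Set.pi_univ]
  have h := measureReal_pi_sum_le_le_exp (ι := ι) (μ := μ) (measurable_of_finite f).aemeasurable
    (.of_forall hf) hδ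
  rw [mean, pi_eq, uniformOn_univ_real, div_le_iff₀' (by positivity), Fintype.card_fun,
    Nat.cast_pow] at h
  exact h

end Hoeffding

theorem sum_fin_add_one {K : Type*} [Field K] [CharZero K] (k : ℕ) :
    ∑ i : Fin k, ((i : K) + 1) = k * (k + 1) / 2 := by
  induction k with
  | zero => simp
  | succ k ih =>
    simp only [Fin.sum_univ_castSucc, Fin.val_castSucc, Fin.val_last, ih]
    push_cast
    ring

theorem card_sum_add_one_lt_le_exp {k : ℕ} (hk : 0 < k) (L : ℕ) {ε : ℝ} (hε : 0 ≤ ε) :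
    (Nat.card {u : Fin L → Fin k //
        ((∑ j, ((u j : ℕ) + 1) : ℕ) : ℝ) < (1 / 2 - ε) * k * L} : ℝ) ≤
      (k : ℝ) ^ L * Real.exp (-2 * ε ^ 2 * L) := by
  have : Nonempty (Fin k) := ⟨⟨0, hk⟩⟩
  have mean : (∑ i : Fin k, ((i : ℝ) + 1)) / k = (k + 1) / 2 := by
    rw [sum_fin_add_one]
    field_simp
  -- `[0, k]` rather than `[1, k]`, whose length is zero for `k = 1` (and `x / 0 = 0`).
  have hoeffding := card_sum_le_le_exp (ι := Fin L) (f := fun i : Fin k ↦ (i : ℝ) + 1) (a := 0)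
    (b := k) (δ := ε * k) (fun i ↦ ⟨by positivity, by exact_mod_cast i.2⟩) (by positivity)
  simp only [Fintype.card_fin, mean] at hoeffding
  have le_mean_sub (u : Fin L → Fin k)
      (hu : ((∑ j, ((u j : ℕ) + 1) : ℕ) : ℝ) < (1 / 2 - ε) * k * L) :
      ∑ j, ((u j : ℝ) + 1) ≤ L * ((k + 1) / 2 - ε * k) := by
    push_cast at hu
    linarith [(Nat.cast_nonneg L : (0 : ℝ) ≤ L)]
  calc _ ≤ _ := Nat.cast_le.2 <| Nat.card_le_card_of_injective
        (Subtype.map id le_mean_sub) (Subtype.map_injective _ Function.injective_id)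
    _ ≤ _ := hoeffding
    _ = _ := by
        rw [sub_zero]
        congr 2
        field_simp

theorem listOf_cons {k L : ℕ} (t : Fin k) (w : Fin L → Fin k) :
    listOf (Fin.cons t w : Fin (L + 1) → Fin k) = t :: listOf w := by
  simp [listOf, List.finRange_succ, Function.comp_def]

namespace WDFA.IsKDFA

variable {k : ℕ} {V : Type*} {D : WDFA k V}

theorem exists_perm_wordCost_eq_sum (hD : D.IsKDFA) (L : ℕ) (v : V) :
    ∃ e : Equiv.Perm (Fin L → Fin k),
      ∀ w, D.wordCost v (listOf w) = ((∑ j, ((e w j : ℕ) + 1) : ℕ) : ℕ∞) := by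
  induction L generalizing v with
  | zero => exact ⟨1, fun w ↦ by simp [listOf, wordCost]⟩
  | succ L ih =>
    obtain ⟨π, hπ⟩ := hD v
    choose e he using fun t ↦ ih (D.trans v t)
    let split := (Fin.consEquiv fun _ : Fin (L + 1) ↦ Fin k).symm
    refine ⟨split.trans ((π.prodShear e).trans split.symm), Fin.consCases fun t w ↦ ?_⟩
    rw [listOf_cons, wordCost, hπ, he]
    simp [split, Fin.consEquiv, Fin.sum_univ_succ]

theorem card_wordCost_lt (hD : D.IsKDFA) (L : ℕ) (v : V) (B : ℝ) :
    Nat.card {w : Fin L → Fin k //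
        ∃ m : ℕ, D.wordCost v (listOf w) = (m : ℕ∞) ∧ (m : ℝ) < B} =
      Nat.card {u : Fin L → Fin k // ((∑ j, ((u j : ℕ) + 1) : ℕ) : ℝ) < B} := by
  obtain ⟨e, he⟩ := hD.exists_perm_wordCost_eq_sum L v
  refine Nat.card_congr (e.subtypeEquiv fun w ↦ ?_)
  simp only [he, Nat.cast_inj, exists_eq_left']

end WDFA.IsKDFA

theorem badProb_le_chernoff_general {k L : ℕ} (hL : 0 < L) (hLk : L ≤ k) {V : Type*}
    {D : WDFA k V} (hD : D.IsKDFA) (v : V) {ε : ℝ} (hε : 0 ≤ ε) :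
    badProb D v L ε ≤
      ((k : ℝ) ^ L * (Nat.factorial (k - L)) / (Nat.factorial k)) *
        Real.exp (-2 * ε ^ 2 * L) := by
  have card_bad_le : (Nat.card {w : Fin L → Fin k // Function.Injective w ∧
      ∃ m : ℕ, D.wordCost v (listOf w) = (m : ℕ∞) ∧ (m : ℝ) < (1 / 2 - ε) * k * L} : ℝ) ≤
      (k : ℝ) ^ L * Real.exp (-2 * ε ^ 2 * L) := by
    refine le_trans ?_ (card_sum_add_one_lt_le_exp (hL.trans_le hLk) L hε)
    rw [← hD.card_wordCost_lt L v]
    exact Nat.cast_le.2 <| Nat.card_le_card_of_injective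
      (Subtype.map id fun _ ↦ And.right) (Subtype.map_injective _ Function.injective_id)
  calc badProb D v L ε
      ≤ (k : ℝ) ^ L * Real.exp (-2 * ε ^ 2 * L) * (k - L).factorial / k.factorial := by
        unfold badProb; gcongr
    _ = _ := by ring

/-- For a `k`-DFA `D` and a positive integer `L ≤ k`:
`P(L, ε) ≤ (k^L · (k−L)!/k!) · exp(−ε²L/4)`, where `P(L, ε) = max_v P(v, L, ε)`. -/
theorem badProb_le_chernoff (k L : ℕ) (hL : 0 < L) (hLk : L ≤ k)
    {V : Type*} [Fintype V] [Nonempty V] (D : WDFA k V) (hD : D.IsKDFA)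
    (ε : ℝ) (hε : 0 < ε) :
    (⨆ v : V, badProb D v L ε) ≤
      ((k : ℝ)^L * (Nat.factorial (k - L)) / (Nat.factorial k)) *
        Real.exp (-(ε^2) * L / 4) := by
  refine ciSup_le fun v ↦ (badProb_le_chernoff_general hL hLk hD v hε.le).trans ?_
  gcongr
  nlinarith [sq_nonneg ε]
end

section
/- Fix ε* > 0 and a positive integer M ≥ 2, and set c = (ε*/M)²/2. Then for each m_1, m_2 ∈ {1, …, M−1} and all sufficiently large k: if X_1, …, X_k are independent with X_j uniform on {1,…,k−j+1}, then the probability that |{j : m_1·k/M < j ≤ (m_1+1)·k/M and X_j/(k−j+1) > m_2/M}| < (1 − ε*)(1 − m_2/M)·k/M is at most exp(−ck). Equivalently, the number of tuples (x_1,…,x_k) with x_j ∈ {1,…,k−j+1} satisfying that event is at most exp(−ck)·k!. -/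
/-!
Chernoff's bound for the lower tail. Up to the factor `k!` we bound the probability that a sum of
independent indicators, one for each `j` in a window of length `ℓ = k / M` and each of mean at least
`1 - q`, falls below `(1 - ε) (1 - q) ℓ`. Markov's inequality for `(1 - ε) ^ (number of successes)`
gives `exp (-(1 - q) ℓ klFun (1 - ε))`, up to a factor `exp (ε (1 - q))` because the window is only
sure to hold `ℓ - 1` integers. Since `klFun (1 - ε) > ε ^ 2 / 2` strictly, replacing the rate by
`ε ^ 2 / 2` absorbs that factor once `ℓ` is large.
-/

section ChernoffCounting

open Finset InformationTheory

lemma sq_one_sub_div_two_lt_klFun {x : ℝ} (hx₀ : 0 ≤ x) (hx₁ : x < 1) :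
    (1 - x) ^ 2 / 2 < klFun x := by
  obtain rfl | hx := hx₀.eq_or_lt
  · norm_num [klFun_zero]
  -- `t < sinh t` at `t = -log x` says `-log x < (x⁻¹ - x) / 2`
  have hsinh : -Real.log x < (x⁻¹ - x) / 2 := by
    have h := Real.self_lt_sinh_iff.2 (neg_pos.2 (Real.log_neg hx hx₁))
    rwa [Real.sinh_eq, neg_neg, Real.exp_neg, Real.exp_log hx] at h
  have hmul : x * -Real.log x < (1 - x ^ 2) / 2 := by
    calc x * -Real.log x < x * ((x⁻¹ - x) / 2) := mul_lt_mul_of_pos_left hsinh hx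
      _ = (1 - x ^ 2) / 2 := by field_simp
  rw [klFun_apply]
  linarith

lemma sum_ite_le_card_mul_exp {α : Type*} {T : Finset α} {A : α → Prop} [DecidablePred A]
    {p s : ℝ} (hs : s ≤ 1) (hp : p * #T ≤ #{y ∈ T | A y}) :
    ∑ y ∈ T, (if A y then s else 1) ≤ #T * Real.exp (-((1 - s) * p)) :=
  calc ∑ y ∈ T, (if A y then s else 1)
      = ∑ y ∈ T, (1 - (1 - s) * if A y then 1 else 0) :=
        sum_congr rfl fun y _ => by split_ifs <;> ring
    _ = #T - (1 - s) * #{y ∈ T | A y} := by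
        rw [sum_sub_distrib, ← mul_sum, sum_boole, sum_const, nsmul_one]
    _ ≤ #T - (1 - s) * (p * #T) := by gcongr
    _ = #T * (-((1 - s) * p) + 1) := by ring
    _ ≤ #T * Real.exp (-((1 - s) * p)) := by gcongr; exact Real.add_one_le_exp _

lemma card_filter_le_mul_rpow_le_sum_pow {β : Type*} (T : Finset β) (N : β → ℕ) {s a : ℝ}
    (hs₀ : 0 < s) (hs₁ : s ≤ 1) :
    #{y ∈ T | (N y : ℝ) ≤ a} * s ^ a ≤ ∑ y ∈ T, s ^ N y :=
  calc #{y ∈ T | (N y : ℝ) ≤ a} * s ^ a = ∑ y ∈ T with (N y : ℝ) ≤ a, s ^ a := by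
        rw [sum_const, nsmul_eq_mul]
    _ ≤ ∑ y ∈ T with (N y : ℝ) ≤ a, s ^ N y := by
        refine sum_le_sum fun y hy => ?_
        rw [← Real.rpow_natCast]
        exact Real.rpow_le_rpow_of_exponent_ge hs₀ hs₁ (mem_filter.1 hy).2
    _ ≤ ∑ y ∈ T, s ^ N y :=
        sum_le_sum_of_subset_of_nonneg (filter_subset _ _) fun _ _ _ => pow_nonneg hs₀.le _

section Product

variable {ι : Type*} [Fintype ι] [DecidableEq ι] {α : ι → Type*}

lemma sum_piFinset_pow_card_filter {R : Type*} [CommSemiring R] (S : ∀ i, Finset (α i))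
    (A : ∀ i, α i → Prop) [∀ i, DecidablePred (A i)] (s : R) :
    ∑ y ∈ Fintype.piFinset S, s ^ #{i | A i (y i)} =
      ∏ i, ∑ y ∈ S i, if A i y then s else 1 := by
  simp only [prod_univ_sum, prod_ite, prod_const, one_pow, mul_one]

variable {S : ∀ i, Finset (α i)} {A : ∀ i, α i → Prop} [∀ i, DecidablePred (A i)]

lemma sum_piFinset_pow_card_filter_le {p : ι → ℝ} {s : ℝ} (hs₀ : 0 ≤ s) (hs₁ : s ≤ 1)
    (hp : ∀ i, p i * #(S i) ≤ #{y ∈ S i | A i y}) :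
    ∑ y ∈ Fintype.piFinset S, s ^ #{i | A i (y i)} ≤
      Real.exp (-((1 - s) * ∑ i, p i)) * #(Fintype.piFinset S) :=
  calc ∑ y ∈ Fintype.piFinset S, s ^ #{i | A i (y i)}
      = ∏ i, ∑ y ∈ S i, (if A i y then s else 1) := sum_piFinset_pow_card_filter S A s
    _ ≤ ∏ i, #(S i) * Real.exp (-((1 - s) * p i)) :=
        prod_le_prod (fun _ _ => sum_nonneg fun _ _ => by split_ifs <;> linarith)
          fun i _ => sum_ite_le_card_mul_exp hs₁ (hp i)
    _ = Real.exp (-((1 - s) * ∑ i, p i)) * #(Fintype.piFinset S) := by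
        rw [prod_mul_distrib, ← Real.exp_sum, sum_neg_distrib, ← mul_sum, mul_comm,
          Fintype.card_piFinset, Nat.cast_prod]

/-- At `μ = ∑ i, p i` this is the usual Chernoff bound `exp (-μ * klFun s)`; a larger `μ` allows for
successes missing from the sum. -/
lemma card_piFinset_filter_le_exp_mul_card {p : ι → ℝ} {s : ℝ} (μ : ℝ) (hs₀ : 0 < s)
    (hs₁ : s ≤ 1) (hp : ∀ i, p i * #(S i) ≤ #{y ∈ S i | A i y}) :
    (#{y ∈ Fintype.piFinset S | (#{i | A i (y i)} : ℝ) ≤ s * μ} : ℝ) ≤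
      Real.exp (-(μ * klFun s) + (1 - s) * (μ - ∑ i, p i)) * #(Fintype.piFinset S) := by
  have hmarkov := (card_filter_le_mul_rpow_le_sum_pow (a := s * μ) (Fintype.piFinset S)
    (fun y => #{i | A i (y i)}) hs₀ hs₁).trans (sum_piFinset_pow_card_filter_le hs₀.le hs₁ hp)
  rw [← le_div_iff₀ (Real.rpow_pos_of_pos hs₀ _)] at hmarkov
  refine hmarkov.trans_eq ?_
  rw [Real.rpow_def_of_pos hs₀, mul_div_right_comm, ← Real.exp_sub, klFun_apply]
  ring_nf

end Product

lemma sub_sub_one_le_card_fin_filter {k : ℕ} {a b : ℝ} (ha : 0 ≤ a) (hb : b ≤ k) :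
    b - a - 1 ≤ (#{j : Fin k | a < (j : ℕ) + 1 ∧ ((j : ℕ) + 1 : ℝ) ≤ b} : ℝ) := by
  set W : Finset (Fin k) := {j | a < (j : ℕ) + 1 ∧ ((j : ℕ) + 1 : ℝ) ≤ b} with hW
  have hsub : Ioc ⌊a⌋₊ ⌊b⌋₊ ⊆ W.image fun j : Fin k => (j : ℕ) + 1 := by
    intro n hn
    obtain ⟨han, hnb⟩ := mem_Ioc.1 hn
    obtain ⟨i, rfl⟩ : ∃ i, n = i + 1 := Nat.exists_eq_add_one.2 (by lia)
    have hai : a < i + 1 := mod_cast (Nat.floor_lt ha).1 han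
    have hib : (i + 1 : ℝ) ≤ b := mod_cast (Nat.le_floor_iff' i.succ_ne_zero).1 hnb
    have hik : i + 1 ≤ k := mod_cast hib.trans hb
    exact mem_image.2 ⟨⟨i, hik⟩, by simp [hW, hai, hib], rfl⟩
  have hcard : ⌊b⌋₊ - ⌊a⌋₊ ≤ #W := Nat.card_Ioc _ _ ▸ (card_le_card hsub).trans card_image_le
  have hfloor : (⌊b⌋₊ : ℝ) ≤ #W + ⌊a⌋₊ := mod_cast Nat.sub_le_iff_le_add.1 hcard
  linarith [Nat.floor_le ha, Nat.lt_floor_add_one b]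

lemma div_sub_one_le_card_window (k : ℕ) {M m : ℝ} (hm : 0 ≤ m) (hmM : m + 1 ≤ M) :
    k / M - 1 ≤
      (#{j : Fin k | m * k / M < (j : ℕ) + 1 ∧ ((j : ℕ) + 1 : ℝ) ≤ (m + 1) * k / M} : ℝ) := by
  have hM : 0 < M := by linarith
  have hend : (m + 1) * k / M ≤ k := by
    rw [div_le_iff₀ hM, mul_comm]
    gcongr
  calc k / M - 1 = (m + 1) * k / M - m * k / M - 1 := by ring
    _ ≤ _ := sub_sub_one_le_card_fin_filter (by positivity) hend

lemma one_sub_mul_le_card_filter_lt_div (n : ℕ) {q : ℝ} (hq : 0 ≤ q) :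
    (1 - q) * n ≤ (#{y ∈ Icc 1 n | q < ((y : ℕ) : ℝ) / n} : ℝ) := by
  obtain rfl | hn := n.eq_zero_or_pos
  · simp
  have hqn : 0 ≤ q * n := by positivity
  have hfilter : {y ∈ Icc 1 n | q < ((y : ℕ) : ℝ) / n} = Ioc ⌊q * n⌋₊ n := by
    ext y
    rw [mem_filter, mem_Icc, mem_Ioc, lt_div_iff₀ (mod_cast hn), ← Nat.floor_lt hqn]
    lia
  have hsub : (n : ℝ) ≤ (n - ⌊q * n⌋₊ : ℕ) + ⌊q * n⌋₊ := mod_cast le_tsub_add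
  rw [hfilter, Nat.card_Ioc]
  linarith [Nat.floor_le hqn]

lemma prod_fin_sub_eq_factorial (k : ℕ) : ∏ j : Fin k, (k - (j : ℕ)) = k.factorial := by
  rw [Fin.prod_univ_eq_prod_range (k - ·), ← Nat.descFactorial_eq_prod_range,
    Nat.descFactorial_self]

lemma natCard_few_lt_div_le_exp_mul_factorial {k : ℕ} (w : Fin k → Prop) [DecidablePred w]
    {q s : ℝ} (μ : ℝ) (hq : 0 ≤ q) (hs₀ : 0 < s) (hs₁ : s ≤ 1) :
    (Nat.card {x : Fin k → ℕ // (∀ j : Fin k, 1 ≤ x j ∧ x j ≤ k - (j : ℕ)) ∧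
        (Nat.card {j : Fin k // w j ∧ q < (x j : ℝ) / ((k : ℝ) - (j : ℕ))} : ℝ) < s * μ} : ℝ) ≤
      Real.exp (-(μ * klFun s) + (1 - s) * (μ - (1 - q) * #{j | w j})) * k.factorial := by
  have hp (j : Fin k) : (if w j then 1 - q else 0) * (#(Icc 1 (k - (j : ℕ))) : ℝ) ≤
      #{y ∈ Icc 1 (k - (j : ℕ)) | w j ∧ q < ((y : ℕ) : ℝ) / ((k : ℝ) - (j : ℕ))} := by
    split_ifs with hj
    · simpa [hj, Nat.cast_sub j.isLt.le] using one_sub_mul_le_card_filter_lt_div (k - (j : ℕ)) hq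
    · simp
  have hsum : ∑ j, (if w j then 1 - q else 0) = (1 - q) * #{j | w j} := by
    rw [← sum_filter, sum_const, nsmul_eq_mul, mul_comm]
  have htuples : #(Fintype.piFinset fun j : Fin k => Icc 1 (k - (j : ℕ))) = k.factorial := by
    simp [Fintype.card_piFinset, prod_fin_sub_eq_factorial]
  have hchernoff := card_piFinset_filter_le_exp_mul_card μ hs₀ hs₁ hp
  rw [hsum, htuples, ← Nat.card_eq_finsetCard] at hchernoff
  refine le_trans (Nat.cast_le.2 ?_) hchernoff
  refine Nat.card_mono (finite_toSet _) fun x ⟨hx, hcount⟩ => ?_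
  rw [Nat.card_eq_fintype_card, Fintype.card_subtype] at hcount
  simpa using ⟨hx, hcount.le⟩

theorem concentration_X_fraction_general {ε : ℝ} (hε : 0 < ε) :
    ∃ L : ℝ, ∀ (k : ℕ) (M m q : ℝ), 0 ≤ m → m + 1 ≤ M → L * M ≤ k → 0 ≤ q → q ≤ 1 →
      (Nat.card {x : Fin k → ℕ // (∀ j : Fin k, 1 ≤ x j ∧ x j ≤ k - (j : ℕ)) ∧
          (Nat.card {j : Fin k //
              (m * k / M < (j : ℕ) + 1 ∧ ((j : ℕ) + 1 : ℝ) ≤ (m + 1) * k / M) ∧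
              q < (x j : ℝ) / ((k : ℝ) - (j : ℕ))} : ℝ) < (1 - ε) * (1 - q) * k / M} : ℝ) ≤
        Real.exp (-((1 - q) * k / M * (ε ^ 2 / 2))) * k.factorial := by
  obtain hε₁ | hε₁ := le_or_gt 1 ε
  · refine ⟨0, fun k M m q hm hmM _ _ hq₁ => ?_⟩
    have hM : 0 ≤ M := by linarith
    have hthreshold : (1 - ε) * (1 - q) * k / M ≤ 0 := by
      rw [mul_div_assoc]
      exact mul_nonpos_of_nonpos_of_nonneg (mul_nonpos_of_nonpos_of_nonneg (sub_nonpos.2 hε₁)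
        (sub_nonneg.2 hq₁)) (by positivity)
    rw [Nat.card_eq_zero.2 (.inl ⟨fun x =>
      (x.2.2.trans_le hthreshold).not_ge (Nat.cast_nonneg _)⟩), Nat.cast_zero]
    positivity
  have hgap : 0 < klFun (1 - ε) - ε ^ 2 / 2 := by
    simpa using sq_one_sub_div_two_lt_klFun (x := 1 - ε) (by linarith) (by linarith)
  refine ⟨ε / (klFun (1 - ε) - ε ^ 2 / 2), fun k M m q hm hmM hk hq₀ hq₁ => ?_⟩
  have hM : 0 < M := by linarith
  let window (j : Fin k) : Prop :=
    m * k / M < (j : ℕ) + 1 ∧ ((j : ℕ) + 1 : ℝ) ≤ (m + 1) * k / M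
  have hwindow : k / M - 1 ≤ (#{j | window j} : ℝ) := div_sub_one_le_card_window k hm hmM
  have hexponent : -((1 - q) * (k / M) * klFun (1 - ε)) +
      (1 - (1 - ε)) * ((1 - q) * (k / M) - (1 - q) * #{j | window j}) ≤
      -((1 - q) * (k / M) * (ε ^ 2 / 2)) := by
    have habsorb : ε ≤ k / M * (klFun (1 - ε) - ε ^ 2 / 2) :=
      (div_le_iff₀ hgap).1 ((le_div_iff₀ hM).2 hk)
    have hdefect : ε * (k / M - #{j | window j}) ≤ ε :=
      mul_le_of_le_one_right hε.le (by linarith)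
    linear_combination (1 - q) * (hdefect.trans habsorb)
  have hchernoff := natCard_few_lt_div_le_exp_mul_factorial window ((1 - q) * (k / M)) hq₀
    (s := 1 - ε) (by linarith) (by linarith)
  rw [mul_assoc (1 - ε), mul_div_assoc (1 - ε), mul_div_assoc (1 - q)]
  exact hchernoff.trans (by gcongr)

end ChernoffCounting

/-- Concentration for the variables `X_j` (uniform on `{1,…,k−j+1}`): with
`c = (ε*/M)²/2`, for each `m₁, m₂ ∈ {1,…,M−1}` and all large `k`, the number of tuples
`(x_1,…,x_k)` with `x_j ∈ {1,…,k−j+1}` for which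
`|{j : m₁k/M < j ≤ (m₁+1)k/M and x_j/(k−j+1) > m₂/M}| < (1−ε*)(1−m₂/M)k/M`
is at most `exp(−ck)·k!`. (Positions are indexed by `j : Fin k`, with `j : Fin k`
representing the index `j+1 ∈ {1,…,k}`, so `x_j ∈ {1,…,k−j}` and
`k − (j+1) + 1 = k − j`.) -/
theorem concentration_X_fraction (ε : ℝ) (hε : 0 < ε) (M : ℕ) (hM : 2 ≤ M) :
    ∀ m₁ ∈ Finset.Icc 1 (M - 1), ∀ m₂ ∈ Finset.Icc 1 (M - 1), ∃ K : ℕ, ∀ k : ℕ, K ≤ k →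
      (Nat.card {x : Fin k → ℕ // (∀ j : Fin k, 1 ≤ x j ∧ x j ≤ k - (j : ℕ)) ∧
          (Nat.card {j : Fin k //
              ((m₁ : ℝ) * k / M < (j : ℕ) + 1 ∧ ((j : ℕ) + 1 : ℝ) ≤ ((m₁ : ℝ) + 1) * k / M) ∧
              (m₂ : ℝ) / M < (x j : ℝ) / ((k : ℝ) - (j : ℕ))} : ℝ) <
            (1 - ε) * (1 - (m₂ : ℝ) / M) * k / M} : ℝ) ≤
        Real.exp (-((ε / M)^2 / 2) * k) * (Nat.factorial k) := by
  obtain ⟨L, hL⟩ := concentration_X_fraction_general hε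
  intro m₁ hm₁ m₂ hm₂
  rw [Finset.mem_Icc] at hm₁ hm₂
  have hM₀ : (0 : ℝ) < M := by positivity
  have hm₁M : (m₁ : ℝ) + 1 ≤ M := mod_cast (by lia : m₁ + 1 ≤ M)
  have hm₂M : (m₂ : ℝ) + 1 ≤ M := mod_cast (by lia : m₂ + 1 ≤ M)
  have hq : 1 / (M : ℝ) ≤ 1 - m₂ / M := by
    rw [one_sub_div hM₀.ne']
    gcongr
    linarith
  refine ⟨⌈L * M⌉₊, fun k hk => (hL k M m₁ (m₂ / M) (by positivity) hm₁M (Nat.ceil_le.1 hk)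
    (by positivity) (by linarith [one_div_pos.2 hM₀])).trans ?_⟩
  have hrate : (ε / M) ^ 2 / 2 * k ≤ (1 - m₂ / M) * k / M * (ε ^ 2 / 2) :=
    calc (ε / M) ^ 2 / 2 * k = 1 / M * k / M * (ε ^ 2 / 2) := by ring
      _ ≤ (1 - m₂ / M) * k / M * (ε ^ 2 / 2) := by gcongr
  gcongr Real.exp ?_ * _
  linarith
end
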